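/- Let (σ, u) be the solution of the mixed variational formulation of the interface problem and (σ_h, u_h) ∈ Σ_k × D_k its mixed finite element approximation. Then the robust best approximation estimate ‖α^{-1/2}(σ − σ_h)‖_{0,Ω} ≤ inf_{τ_h^f ∈ Σ_k^f} ‖α^{-1/2}(σ − τ_h^f)‖_{0,Ω} holds, where the infimum is over the discrete equilibrated space Σ_k^f, and the bound involves no constant depending on the diffusion coefficient α or the mesh. -/

import Mathlib

/-!
STATEMENT 0 (Theorem 3.2: robust best approximation of the flux in the discrete
equilibrated space).

Abstract model of the mixed FEM setting for the interface problem
`-∇·(α ∇u) = f` in `Ω`, `u = 0` on `∂Ω`, `σ = -α∇u`: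

* `V` models the flux space `H(div;Ω)` endowed with the `α⁻¹`-weighted `L²(Ω)`
  inner product, so that `‖τ‖ = ‖α^{-1/2} τ‖_{0,Ω}` and `⟪σ, τ⟫ = (α⁻¹ σ, τ)`;
  this builds the (piecewise constant, positive) diffusion coefficient `α` into
  the geometry of `V`, and the conclusion below holds with constant `1`:
  no constant depending on `α` or on the mesh appears.
* `W` models `L²(Ω)` with its usual inner product, `dv` the divergence `∇·`.
* `Sk` models the discrete space `Σ_k` (Raviart–Thomas `RT_k` or
  Brezzi–Douglas–Marini `BDM_{k+1}` on a regular triangulation `T` of `Ω` not cut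
  by the interfaces), `Dk` models the discontinuous piecewise polynomial space
  `D_k`, and `Qf` models the `L²`-projection `Q_h^k f` of `f ∈ L²(Ω)` onto `D_k`.
* `(σ, u)` solves the mixed variational formulation and `(σ_h, u_h) ∈ Σ_k × D_k`
  is its mixed finite element approximation.
* The discrete equilibrated space is `Σ_k^f = {τ_h ∈ Σ_k : ∇·τ_h = Q_h^k f}`,
  modeled as the subtype `{τ : V // τ ∈ Sk ∧ dv τ = Qf}`.
-/

open scoped RealInnerProductSpace

theorem robust_best_approximation_in_discrete_equilibrated_space
    {V W : Type*} [NormedAddCommGroup V] [InnerProductSpace ℝ V]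
    [NormedAddCommGroup W] [InnerProductSpace ℝ W]
    -- discrete spaces Σ_k and D_k; the divergence maps Σ_k into D_k
    (Sk : Submodule ℝ V) (Dk : Submodule ℝ W)
    (dv : V →ₗ[ℝ] W)
    (hdv : ∀ τ ∈ Sk, dv τ ∈ Dk)
    -- the datum f and its L²-projection Q_h^k f onto D_k
    (f Qf : W) (hQf_mem : Qf ∈ Dk) (hQf_proj : ∀ v ∈ Dk, ⟪f - Qf, v⟫ = 0)
    -- exact solution (σ, u) of the mixed formulation
    (σ : V) (u : W)
    (hmixed₁ : ∀ τ : V, ⟪σ, τ⟫ - ⟪dv τ, u⟫ = 0)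
    (hmixed₂ : ∀ v : W, ⟪dv σ, v⟫ = ⟪f, v⟫)
    -- mixed finite element approximation (σ_h, u_h) ∈ Σ_k × D_k
    (σh : V) (uh : W) (hσh : σh ∈ Sk) (huh : uh ∈ Dk)
    (hdisc₁ : ∀ τh ∈ Sk, ⟪σh, τh⟫ - ⟪dv τh, uh⟫ = 0)
    (hdisc₂ : ∀ vh ∈ Dk, ⟪dv σh, vh⟫ = ⟪f, vh⟫) :
    -- ‖α^{-1/2}(σ - σ_h)‖_{0,Ω} ≤ inf_{τ_h^f ∈ Σ_k^f} ‖α^{-1/2}(σ - τ_h^f)‖_{0,Ω}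
    ‖σ - σh‖ ≤ ⨅ τf : {τ : V // τ ∈ Sk ∧ dv τ = Qf}, ‖σ - (τf : V)‖ := by
  have hd : dv σh = Qf := by
    have hm : dv σh - Qf ∈ Dk := Dk.sub_mem (hdv σh hσh) hQf_mem
    have h1 := hdisc₂ _ hm
    have h2 := hQf_proj _ hm
    have h3 : ⟪dv σh - Qf, dv σh - Qf⟫ = 0 := by
      rw [inner_sub_left] at h2 ⊢
      linarith
    exact sub_eq_zero.mp (inner_self_eq_zero.mp h3)
  haveI : Nonempty {τ : V // τ ∈ Sk ∧ dv τ = Qf} := ⟨⟨σh, hσh, hd⟩⟩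
  refine le_ciInf ?_
  rintro ⟨τ, hτ, hτd⟩
  have he : dv (σh - τ) = 0 := by rw [map_sub, hd, hτd, sub_self]
  have h1 := hmixed₁ (σh - τ)
  have h2 := hdisc₁ (σh - τ) (Sk.sub_mem hσh hτ)
  rw [he, inner_zero_left, sub_zero] at h1 h2
  have h3 : ⟪σ - σh, σh - τ⟫ = 0 := by rw [inner_sub_left, h1, h2, sub_zero]
  have h4 := norm_add_sq_eq_norm_sq_add_norm_sq_of_inner_eq_zero (σ - σh) (σh - τ) h3
  rw [sub_add_sub_cancel] at h4
  change ‖σ - σh‖ ≤ ‖σ - τ‖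
  nlinarith [norm_nonneg (σ - σh), norm_nonneg (σ - τ), mul_self_nonneg ‖σh - τ‖]
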